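/- Let A be a finite type of odd cardinality and let n ≥ 4. Then the full symmetric group of (Fin n → A) equals the subgroup of Perm(Fin n → A) generated by the applications, along injections ι : Fin 4 ↪ Fin n, of arbitrary permutations of (Fin 4 → A). In words: for odd |A|, the permutations of A⁴ generate all permutations of Aⁿ for all n ≥ 4. -/

import Mathlib

/-- Extension of an operation on `m`-letter words to `n`-letter words along an
injection of coordinates: apply `F` on the coordinates selected by `ι`, leave
the rest unchanged. -/
noncomputable def extWord {A : Type*} {m n : ℕ} (ι : Fin m ↪ Fin n)
    (F : (Fin m → A) → (Fin m → A)) (x : Fin n → A) : Fin n → A :=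
  fun k => if h : ∃ j, ι j = k then F (x ∘ ι) h.choose else x k

theorem extWord_comp {A : Type*} {m n : ℕ} (ι : Fin m ↪ Fin n)
    (F : (Fin m → A) → (Fin m → A)) (x : Fin n → A) :
    (extWord ι F x) ∘ ι = F (x ∘ ι) := by
  funext j
  have h : ∃ j', ι j' = ι j := ⟨j, rfl⟩
  simp only [Function.comp_apply, extWord, dif_pos h]
  congr 1
  exact ι.injective h.choose_spec

/-- The application of a gate `f` of arity `m` along an injection `ι : Fin m ↪ Fin n`:
the resulting permutation `g` of words of length `n` satisfies
`(g x) (ι j) = (f (x ∘ ι)) j` for all `j : Fin m`, and `g x k = x k` for every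
coordinate `k` outside the range of `ι`. -/
noncomputable def applyAlong {A : Type*} {m n : ℕ} (f : Equiv.Perm (Fin m → A))
    (ι : Fin m ↪ Fin n) : Equiv.Perm (Fin n → A) where
  toFun := extWord ι f
  invFun := extWord ι f.symm
  left_inv x := by
    funext k
    by_cases h : ∃ j, ι j = k
    · obtain ⟨j, rfl⟩ := h
      have hj : extWord ι (⇑f.symm) (extWord ι (⇑f) x) (ι j)
          = ((extWord ι (⇑f.symm) (extWord ι (⇑f) x)) ∘ ι) j := rfl
      rw [hj, extWord_comp, extWord_comp]
      simp
    · simp only [extWord, dif_neg h]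
  right_inv x := by
    funext k
    by_cases h : ∃ j, ι j = k
    · obtain ⟨j, rfl⟩ := h
      have hj : extWord ι (⇑f) (extWord ι (⇑f.symm) x) (ι j)
          = ((extWord ι (⇑f) (extWord ι (⇑f.symm) x)) ∘ ι) j := rfl
      rw [hj, extWord_comp, extWord_comp]
      simp
    · simp only [extWord, dif_neg h]

open Equiv in
theorem aux_threeCycle {X : Type*} [Fintype X] [DecidableEq X] (σ τ : Perm X) (p : X)
    (hs : σ p ≠ p) (ht : τ p ≠ p) (hu : ∀ y, σ y ≠ y → τ y ≠ y → y = p) :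
    (σ * τ * σ⁻¹ * τ⁻¹).IsThreeCycle := by
  have hU : ∀ y, y ≠ p → σ y = y ∨ τ y = y := by
    intro y hy
    by_contra! h
    exact hy (hu y h.1 h.2)
  have hsp : τ (σ p) = σ p := by
    rcases hU (σ p) hs with h | h
    · exact absurd (σ.injective h) hs
    · exact h
  have htp : σ (τ p) = τ p := by
    rcases hU (τ p) ht with h | h
    · exact h
    · exact absurd (τ.injective h) ht
  have hst : σ p ≠ τ p := by
    intro h
    rw [h] at hsp
    exact ht (τ.injective hsp)
  have key : σ * τ * σ⁻¹ * τ⁻¹ = swap p (τ p) * swap p (σ p) := by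
    rw [mul_inv_eq_iff_eq_mul, mul_inv_eq_iff_eq_mul]
    ext y
    simp only [Perm.mul_apply]
    have s := σ.injective
    have t := τ.injective
    by_cases h1 : y = p
    · subst h1
      simp [htp, hsp]
    · by_cases h2 : σ y = p
      · have h3 : τ y = y := (hU y h1).resolve_left (by rw [h2]; exact Ne.symm h1)
        rw [h3, h2]
        rw [swap_apply_of_ne_of_ne ht hst.symm, swap_apply_right]
      · grind
  rw [key]
  exact Perm.isThreeCycle_swap_mul_swap_same ht.symm hs.symm hst.symm

open Equiv in
theorem aux_core {A C : Type*} [Fintype A] [DecidableEq A] [Fintype C] [DecidableEq C]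
    (hA : Odd (Fintype.card A)) (hA3 : 3 ≤ Fintype.card A) (hC : 3 ≤ Fintype.card C)
    (H : Subgroup (Perm (A × C × A)))
    (hL : ∀ (f : Perm (A × C)) (σ : Perm (A × C × A)),
      (∀ a c b, σ (a, c, b) = ((f (a, c)).1, (f (a, c)).2, b)) → σ ∈ H)
    (hR : ∀ (g : Perm (C × A)) (σ : Perm (A × C × A)),
      (∀ a c b, σ (a, c, b) = (a, g (c, b))) → σ ∈ H) : H = ⊤ := by
  classical
  have hL' : ∀ f : Perm (A × C), ∃ σ ∈ H,
      ∀ a c b, σ (a, c, b) = ((f (a, c)).1, (f (a, c)).2, b) := by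
    intro f
    refine ⟨(Equiv.prodAssoc A C A).permCongr (f.prodCongr (Equiv.refl A)), hL f _ ?_, ?_⟩ <;>
    · intro a c b
      rfl
  have hR' : ∀ g : Perm (C × A), ∃ σ ∈ H, ∀ a c b, σ (a, c, b) = (a, g (c, b)) := by
    intro g
    refine ⟨(Equiv.refl A).prodCongr g, hR g _ ?_, ?_⟩ <;>
    · intro a c b
      rfl
  obtain ⟨c0, c1, c2, h01, h02, h12⟩ := Fintype.two_lt_card_iff.mp hC
  obtain ⟨a0, a1, a2, k01, k02, k12⟩ := Fintype.two_lt_card_iff.mp hA3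
  -- stabilizers are transitive on the complement
  have stab : ∀ x y z : A × C × A, y ≠ x → z ≠ x → ∃ h ∈ H, h x = x ∧ h y = z := by
    rintro ⟨a, c, b⟩
    obtain ⟨d, hd⟩ : ∃ d, d ≠ c := by
      by_cases h : c0 = c
      · exact ⟨c1, fun h' => h01 (h.trans h'.symm)⟩
      · exact ⟨c0, h⟩
    have stepL : ∀ a1 c1 a2 c2 b1, (a1, c1) ≠ (a, c) → (a2, c2) ≠ (a, c) →
        ∃ h ∈ H, h (a, c, b) = (a, c, b) ∧ h (a1, c1, b1) = (a2, c2, b1) := by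
      intro a1 c1 a2 c2 b1 h1 h2
      obtain ⟨σ, hσ, hh⟩ := hL' (swap (a1, c1) (a2, c2))
      refine ⟨σ, hσ, ?_, ?_⟩
      · rw [hh, swap_apply_of_ne_of_ne h1.symm h2.symm]
      · rw [hh, swap_apply_left]
    have stepR : ∀ a1 c1 b1 c2 b2, (c1, b1) ≠ (c, b) → (c2, b2) ≠ (c, b) →
        ∃ h ∈ H, h (a, c, b) = (a, c, b) ∧ h (a1, c1, b1) = (a1, c2, b2) := by
      intro a1 c1 b1 c2 b2 h1 h2
      obtain ⟨σ, hσ, hh⟩ := hR' (swap (c1, b1) (c2, b2))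
      refine ⟨σ, hσ, ?_, ?_⟩
      · rw [hh, swap_apply_of_ne_of_ne h1.symm h2.symm]
      · rw [hh, swap_apply_left]
    have can : ∀ y, y ≠ (a, c, b) → ∃ h ∈ H, h (a, c, b) = (a, c, b) ∧ h y = (a, d, b) := by
      rintro ⟨a1, c1, b1⟩ hy
      by_cases h : (a1, c1) = (a, c)
      · have hb : (c1, b1) ≠ (c, b) := by
          intro h'
          apply hy
          simp_all
        obtain ⟨h1, m1, e1, f1⟩ := stepR a1 c1 b1 d b hb (by simp [hd])
        obtain ⟨h2, m2, e2, f2⟩ := stepL a1 d a d b (by simp [hd]) (by simp [hd])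
        exact ⟨h2 * h1, H.mul_mem m2 m1, by simp [e1, e2], by simp [f1, f2]⟩
      · obtain ⟨h1, m1, e1, f1⟩ := stepL a1 c1 a d b1 h (by simp [hd])
        obtain ⟨h2, m2, e2, f2⟩ := stepR a d b1 d b (by simp [hd]) (by simp [hd])
        exact ⟨h2 * h1, H.mul_mem m2 m1, by simp [e1, e2], by simp [f1, f2]⟩
    intro y z hy hz
    obtain ⟨h1, m1, e1, f1⟩ := can y hy
    obtain ⟨h2, m2, e2, f2⟩ := can z hz
    refine ⟨h2⁻¹ * h1, H.mul_mem (H.inv_mem m2) m1, ?_, ?_⟩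
    · rw [Perm.mul_apply, e1, Perm.inv_eq_iff_eq, e2]
    · rw [Perm.mul_apply, f1, Perm.inv_eq_iff_eq, f2]
  have htrans : MulAction.IsPretransitive H (A × C × A) := by
    constructor
    intro x y
    have : ∃ w : A × C × A, w ≠ x ∧ w ≠ y := by
      by_contra! hcon
      have h0 := hcon (a0, c0, a0)
      have h1 := hcon (a1, c0, a0)
      have h2 := hcon (a2, c0, a0)
      clear hcon stab hL hR hL' hR'
      have n01 : (a0, c0, a0) ≠ (a1, c0, a0) := by simp [k01]
      have n02 : (a0, c0, a0) ≠ (a2, c0, a0) := by simp [k02]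
      have n12 : (a1, c0, a0) ≠ (a2, c0, a0) := by simp [k12]
      by_cases e0 : (a0, c0, a0) = x
      · exact n12 ((h1 (fun e => n01 (e0.trans e.symm))).trans
          (h2 (fun e => n02 (e0.trans e.symm))).symm)
      · by_cases e1 : (a1, c0, a0) = x
        · exact n02 ((h0 e0).trans (h2 (fun e => n12 (e1.trans e.symm))).symm)
        · exact n01 ((h0 e0).trans (h1 e1).symm)
    obtain ⟨w, hx, hy⟩ := this
    obtain ⟨h, m, -, e⟩ := stab w x y hx.symm hy.symm
    exact ⟨⟨h, m⟩, e⟩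
  have hprim : MulAction.IsPreprimitive H (A × C × A) := by
    refine ⟨fun {B} hB => ?_⟩
    rw [MulAction.IsTrivialBlock]
    by_cases hs : B.Subsingleton
    · exact Or.inl hs
    · right
      rw [Set.not_subsingleton_iff] at hs
      obtain ⟨x, hx, y, hy, hxy⟩ := hs
      ext z
      simp only [Set.mem_univ, iff_true]
      by_cases hz : z = x
      · rw [hz]; exact hx
      · obtain ⟨h, m, e, f⟩ := stab x y z hxy.symm hz
        have := hB.smul_eq_of_mem (g := (⟨h, m⟩ : H)) hx (by
          change h x ∈ B
          rw [e]; exact hx)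
        rw [← this, ← f]
        exact Set.smul_mem_smul_set (a := (⟨h, m⟩ : H)) hy
  -- a three-cycle
  have hthree : ∃ g ∈ H, g.IsThreeCycle := by
    obtain ⟨σ, hσ, es⟩ := hL' (swap (a0, c0) (a0, c1))
    obtain ⟨τ, hτ, et⟩ := hR' (swap (c0, a0) (c2, a0))
    refine ⟨σ * τ * σ⁻¹ * τ⁻¹, H.mul_mem (H.mul_mem (H.mul_mem hσ hτ) (H.inv_mem hσ))
      (H.inv_mem hτ), aux_threeCycle σ τ (a0, c0, a0) ?_ ?_ ?_⟩
    · rw [es, swap_apply_left]; simp [h01.symm]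
    · rw [et, swap_apply_left]; simp [h02.symm]
    · rintro ⟨a, c, b⟩ h1 h2
      rw [es] at h1
      rw [et] at h2
      have h1' : swap (a0, c0) (a0, c1) (a, c) ≠ (a, c) := by
        intro h; apply h1; rw [h]
      have h2' : swap (c0, a0) (c2, a0) (c, b) ≠ (c, b) := by
        intro h; apply h2; rw [h]
      have h1'' := (swap_apply_ne_self_iff.mp h1').2
      have h2'' := (swap_apply_ne_self_iff.mp h2').2
      simp only [Prod.mk.injEq] at h1'' h2'' ⊢
      grind
  obtain ⟨g3, hg3, h3⟩ := hthree
  have halt : alternatingGroup (A × C × A) ≤ H :=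
    Perm.alternatingGroup_le_of_isPreprimitive_of_isThreeCycle_mem hprim h3 hg3
  -- an odd element
  obtain ⟨o, ho, so⟩ : ∃ o ∈ H, Perm.sign o = -1 := by
    refine ⟨Equiv.prodCongrRight (fun _ : A => swap (c0, a0) (c1, a0)),
      hR (swap (c0, a0) (c1, a0)) _ (fun a c b => rfl), ?_⟩
    rw [Perm.sign_prodCongrRight, Finset.prod_const, Perm.sign_swap (by simp [h01])]
    exact hA.neg_one_pow
  rw [eq_top_iff]
  intro g _
  rcases Int.units_eq_one_or (Perm.sign g) with h | h
  · exact halt (Perm.mem_alternatingGroup.mpr h)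
  · have : g * o ∈ H := halt (Perm.mem_alternatingGroup.mpr (by rw [map_mul, h, so]; rfl))
    exact (H.mul_mem_cancel_right ho).mp this

theorem applyAlong_on {A : Type*} {m n : ℕ} (f : Equiv.Perm (Fin m → A))
    (ι : Fin m ↪ Fin n) (x : Fin n → A) (j : Fin m) :
    applyAlong f ι x (ι j) = f (x ∘ ι) j :=
  congrFun (extWord_comp ι f x) j

theorem applyAlong_off {A : Type*} {m n : ℕ} (f : Equiv.Perm (Fin m → A))
    (ι : Fin m ↪ Fin n) (x : Fin n → A) (k : Fin n) (hk : ¬ ∃ j, ι j = k) :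
    applyAlong f ι x k = x k := by
  change extWord ι f x k = x k
  simp only [extWord, dif_neg hk]

theorem applyAlong_unique {A : Type*} {m n : ℕ} (f : Equiv.Perm (Fin m → A))
    (ι : Fin m ↪ Fin n) (σ : Equiv.Perm (Fin n → A))
    (h1 : ∀ x j, σ x (ι j) = f (x ∘ ι) j) (h2 : ∀ x k, (¬ ∃ j, ι j = k) → σ x k = x k) :
    σ = applyAlong f ι := by
  ext x k
  by_cases hk : ∃ j, ι j = k
  · obtain ⟨j, rfl⟩ := hk
    rw [h1, applyAlong_on]
  · rw [h2 x k hk, applyAlong_off f ι x k hk]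

theorem applyAlong_comp_eq {A : Type*} {m n : ℕ} (f : Equiv.Perm (Fin m → A))
    (ι : Fin m ↪ Fin n) (x : Fin n → A) : (applyAlong f ι x) ∘ ι = f (x ∘ ι) :=
  extWord_comp ι f x

theorem applyAlong_mul {A : Type*} {m n : ℕ} (f g : Equiv.Perm (Fin m → A))
    (ι : Fin m ↪ Fin n) : applyAlong (f * g) ι = applyAlong f ι * applyAlong g ι := by
  symm
  apply applyAlong_unique
  · intro x j
    rw [Equiv.Perm.mul_apply, applyAlong_on, applyAlong_comp_eq, Equiv.Perm.mul_apply]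
  · intro x k hk
    rw [Equiv.Perm.mul_apply, applyAlong_off _ _ _ _ hk, applyAlong_off _ _ _ _ hk]

theorem applyAlong_trans {A : Type*} {l m n : ℕ} (f : Equiv.Perm (Fin l → A))
    (ι : Fin l ↪ Fin m) (κ : Fin m ↪ Fin n) :
    applyAlong (applyAlong f ι) κ = applyAlong f (ι.trans κ) := by
  apply applyAlong_unique
  · intro x j
    rw [Function.Embedding.trans_apply, applyAlong_on, applyAlong_on]
    rfl
  · intro x k hk
    by_cases h : ∃ j, κ j = k
    · obtain ⟨j, rfl⟩ := h
      rw [applyAlong_on, applyAlong_off]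
      · rfl
      · rintro ⟨i, rfl⟩
        exact hk ⟨i, rfl⟩
    · rw [applyAlong_off _ _ _ _ h]

/-- The subgroup generated by 4-ary gates. -/
def gateGroup (A : Type*) (n : ℕ) : Subgroup (Equiv.Perm (Fin n → A)) :=
  Subgroup.closure {σ : Equiv.Perm (Fin n → A) |
          ∃ (f : Equiv.Perm (Fin 4 → A)) (ι : Fin 4 ↪ Fin n), σ = applyAlong f ι}

theorem applyAlong_mem {A : Type*} {m n : ℕ} (hm : gateGroup A m = ⊤)
    (f : Equiv.Perm (Fin m → A)) (κ : Fin m ↪ Fin n) : applyAlong f κ ∈ gateGroup A n := by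
  let φ : Equiv.Perm (Fin m → A) →* Equiv.Perm (Fin n → A) :=
    MonoidHom.mk' (fun f => applyAlong f κ) (fun f g => applyAlong_mul f g κ)
  have h : gateGroup A m ≤ (gateGroup A n).comap φ := by
    refine (Subgroup.closure_le _).mpr ?_
    rintro _ ⟨f, ι, rfl⟩
    refine Subgroup.subset_closure ⟨f, ι.trans κ, ?_⟩
    exact applyAlong_trans f ι κ
  rw [hm] at h
  exact h (Subgroup.mem_top f)

/-- Splitting off the first and last letters of a word. -/
def splitWord (A : Type*) (k : ℕ) : (Fin (k + 2) → A) ≃ A × (Fin k → A) × A where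
  toFun x := (x 0, fun i => x i.castSucc.succ, x (Fin.last k).succ)
  invFun p := Fin.cons p.1 (Fin.snoc p.2.1 p.2.2 : Fin (k + 1) → A)
  left_inv x := by
    funext i
    refine Fin.cases ?_ (fun j => ?_) i
    · simp
    · refine Fin.lastCases ?_ (fun l => ?_) j <;> simp
  right_inv p := by
    obtain ⟨a, c, b⟩ := p
    simp

theorem gate_step {A : Type*} [Fintype A] [DecidableEq A] (hA : Odd (Fintype.card A))
    (hA3 : 3 ≤ Fintype.card A) (k : ℕ) (hk : 1 ≤ k) (hm : gateGroup A (k + 1) = ⊤) :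
    gateGroup A (k + 2) = ⊤ := by
  let e := splitWord A k
  have hC : 3 ≤ Fintype.card (Fin k → A) := by
    rw [Fintype.card_fun, Fintype.card_fin]
    exact hA3.trans (Nat.le_self_pow (by omega) _)
  have key : (gateGroup A (k + 2)).comap e.permCongrHom.symm.toMonoidHom = ⊤ := by
    apply aux_core hA hA3 hC
    · intro f σ hσ
      let u : A × (Fin k → A) ≃ (Fin (k + 1) → A) := Fin.consEquiv (fun _ => A)
      have : e.permCongrHom.symm σ = applyAlong (u.permCongr f) Fin.castSuccEmb := by
        apply applyAlong_unique
        · intro x j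
          change e.symm (σ (e x)) j.castSucc = u (f (u.symm (x ∘ Fin.castSucc))) j
          have h1 : e x = (x 0, (fun i => x i.castSucc.succ), x (Fin.last k).succ) := rfl
          have h2 : u.symm (x ∘ Fin.castSucc) = (x 0, fun i => x i.castSucc.succ) := rfl
          rw [h1, hσ, h2]
          generalize f (x 0, fun i => x i.castSucc.succ) = q
          obtain ⟨a, c⟩ := q
          refine Fin.cases ?_ (fun i => ?_) j
          · rfl
          · change (Fin.cons a (Fin.snoc c _ : Fin (k + 1) → A) : Fin (k + 2) → A) i.succ.castSucc
              = (Fin.cons a c : Fin (k + 1) → A) i.succ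
            rw [← Fin.succ_castSucc]
            simp
        · intro x j hj
          have hj' : j = (Fin.last k).succ := by
            by_contra hne
            exact hj ⟨j.castPred hne, by simp⟩
          subst hj'
          change e.symm (σ (e x)) (Fin.last k).succ = x (Fin.last k).succ
          have h1 : e x = (x 0, (fun i => x i.castSucc.succ), x (Fin.last k).succ) := rfl
          rw [h1, hσ]
          simp [e, splitWord]
      change e.permCongrHom.symm σ ∈ gateGroup A (k + 2)
      rw [this]
      exact applyAlong_mem hm _ _
    · intro g σ hσ
      let u : (Fin k → A) × A ≃ (Fin (k + 1) → A) :=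
        (Equiv.prodComm _ _).trans (Fin.snocEquiv (fun _ => A))
      have : e.permCongrHom.symm σ = applyAlong (u.permCongr g) (Fin.succEmb (k + 1)) := by
        apply applyAlong_unique
        · intro x j
          change e.symm (σ (e x)) j.succ = u (g (u.symm (x ∘ Fin.succ))) j
          have h1 : e x = (x 0, (fun i => x i.castSucc.succ), x (Fin.last k).succ) := rfl
          have h2 : u.symm (x ∘ Fin.succ) = (fun i => x i.castSucc.succ, x (Fin.last k).succ) :=
            rfl
          rw [h1, hσ, h2]
          rfl
        · intro x j hj
          have hj' : j = 0 := by
            by_contra hne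
            exact hj ⟨j.pred hne, by simp⟩
          subst hj'
          change e.symm (σ (e x)) 0 = x 0
          have h1 : e x = (x 0, (fun i => x i.castSucc.succ), x (Fin.last k).succ) := rfl
          rw [h1, hσ]
          rfl
      change e.permCongrHom.symm σ ∈ gateGroup A (k + 2)
      rw [this]
      exact applyAlong_mem hm _ _
  rw [eq_top_iff]
  intro g _
  have h : e.permCongrHom g ∈ (gateGroup A (k + 2)).comap e.permCongrHom.symm.toMonoidHom := by
    rw [key]; trivial
  have h' : e.permCongrHom.symm (e.permCongrHom g) ∈ gateGroup A (k + 2) := h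
  rwa [MulEquiv.symm_apply_apply] at h'

theorem gateGroup_four (A : Type*) : gateGroup A 4 = ⊤ := by
  rw [eq_top_iff]
  intro g _
  refine Subgroup.subset_closure ⟨g, Function.Embedding.refl _, ?_⟩
  apply applyAlong_unique
  · intro x j
    rfl
  · intro x k hk
    exact absurd ⟨k, rfl⟩ hk

/-- **For odd alphabets, 4-ary gates generate everything** (Corollary 11 of the paper).
Let `A` be a finite type of odd cardinality and `n ≥ 4`.  Then the full symmetric group
of `Fin n → A` equals the subgroup of `Perm (Fin n → A)` generated by the applications,
along injections `ι : Fin 4 ↪ Fin n`, of arbitrary permutations of `Fin 4 → A`. -/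
theorem fourAry_gates_generate_top_of_odd_card
    {A : Type*} [Fintype A] [DecidableEq A] (hA : Odd (Fintype.card A))
    (n : ℕ) (hn : 4 ≤ n) :
    Subgroup.closure
        {σ : Equiv.Perm (Fin n → A) |
          ∃ (f : Equiv.Perm (Fin 4 → A)) (ι : Fin 4 ↪ Fin n),
            σ = applyAlong f ι} = ⊤ := by
  change gateGroup A n = ⊤
  by_cases h1 : Fintype.card A ≤ 1
  · have : Subsingleton A := Fintype.card_le_one_iff_subsingleton.mp h1
    exact Subsingleton.elim _ _
  · have hA3 : 3 ≤ Fintype.card A := by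
      obtain ⟨r, hr⟩ := hA
      omega
    induction n, hn using Nat.le_induction with
    | base => exact gateGroup_four A
    | succ n hn ih =>
      obtain ⟨k, rfl⟩ : ∃ k, n = k + 1 := ⟨n - 1, by omega⟩
      exact gate_step hA hA3 k (by omega) ih
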